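/- arXiv:2404.13773 — 5 statements merged into one kernel-verified Lean document; each statement's English description precedes it below -/
import Mathlib

section
/- The Kraus operators of the second Hamiltonian path P₂ = (f, j, h) of G(Π₂) satisfy the Choi–Kraus normalization: S_f* S_f + S_j* S_j + S_h* S_h = 1, where 1 is the identity operator on H. -/
/- Hilbert space `H = ℓ²(ℕ₊, ℂ)` with standard orthonormal basis `(e m)` indexed by the
positive integers `ℕ+`. -/

noncomputable section

open ContinuousLinearMap

/-- The Hilbert space `ℓ²(ℕ₊, ℂ)` of square-summable complex sequences indexed by the
positive integers. -/
abbrev H : Type := lp (fun _ : ℕ+ => ℂ) 2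

/-- The standard orthonormal basis vector `e m` of `H`, for `m ≥ 1`. -/
def e (m : ℕ+) : H := lp.single 2 m 1

/-- `MapsBasis S a b` says that the bounded operator `S` sends the basis vector `e (a n)` to
`e (b n)` for every `n ≥ 1`, and sends to `0` every basis vector not of the form `e (a n)`;
i.e. `S = Σ_{n ≥ 1} E_{b n, a n}` as in the paper. -/
def MapsBasis (S : H →L[ℂ] H) (a b : ℕ+ → ℕ+) : Prop :=
  (∀ n : ℕ+, S (e (a n)) = e (b n)) ∧ ∀ m : ℕ+, (∀ n : ℕ+, m ≠ a n) → S (e m) = 0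

theorem aux_inner_e (k m : ℕ+) : inner ℂ (e k) (e m) = if k = m then (1 : ℂ) else 0 := by
  unfold e
  rw [lp.inner_single_left]
  by_cases h : k = m
  · subst h; simp
  · simp [h, lp.single_apply]

theorem aux_inner (S : H →L[ℂ] H) (a b : ℕ+ → ℕ+) (h : MapsBasis S a b)
    (hb : Function.Injective b) (k m : ℕ+) :
    inner ℂ (S (e k)) (S (e m)) =
      open Classical in if k = m ∧ ∃ n, m = a n then (1 : ℂ) else 0 := by
  classical
  by_cases hm : ∃ n, m = a n
  · by_cases hk : ∃ n, k = a n
    · obtain ⟨n, rfl⟩ := hm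
      obtain ⟨p, rfl⟩ := hk
      rw [h.1, h.1, aux_inner_e]
      by_cases hpn : p = n
      · subst hpn; simp
      · have h1 : b p ≠ b n := fun hh => hpn (hb hh)
        have h2 : a p ≠ a n := by
          intro hh
          have h3 := h.1 p
          rw [hh, h.1 n] at h3
          have h4 := aux_inner_e (b p) (b n)
          rw [h3, aux_inner_e] at h4
          simp [h1] at h4
        simp [h1, h2]
    · have h0 : S (e k) = 0 := h.2 k (fun n hn => hk ⟨n, hn⟩)
      have hne : k ≠ m := by rintro rfl; exact hk hm
      simp [h0, hne]
  · have h0 : S (e m) = 0 := h.2 m (fun n hn => hm ⟨n, hn⟩)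
    simp [h0, hm]

theorem aux_coe_sub (x y : ℕ+) (h : (y : ℕ) < x) : ((x - y : ℕ+) : ℕ) = x - y := by
  rw [PNat.sub_coe, if_pos (by exact_mod_cast h)]

theorem aux_c1 (n : ℕ+) : ((3 * n - 2 : ℕ+) : ℕ) = 3 * n - 2 := by
  have := n.pos
  rw [aux_coe_sub] <;> simp <;> omega
theorem aux_c2 (n : ℕ+) : ((3 * n - 1 : ℕ+) : ℕ) = 3 * n - 1 := by
  have := n.pos
  rw [aux_coe_sub] <;> simp <;> omega
theorem aux_c4 (n : ℕ+) : ((6 * n - 4 : ℕ+) : ℕ) = 6 * n - 4 := by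
  have := n.pos
  rw [aux_coe_sub] <;> simp <;> omega
theorem aux_c5 (n : ℕ+) : ((6 * n - 3 : ℕ+) : ℕ) = 6 * n - 3 := by
  have := n.pos
  rw [aux_coe_sub] <;> simp <;> omega

theorem aux_e1 (m : ℕ+) : (∃ n : ℕ+, m = 3 * n - 2) ↔ (m : ℕ) % 3 = 1 := by
  constructor
  · rintro ⟨n, rfl⟩
    have := n.pos
    rw [aux_c1]; omega
  · intro h
    obtain ⟨p, hp⟩ : ∃ p : ℕ+, (p : ℕ) = (m + 2) / 3 := ⟨Nat.toPNat _ (by omega), rfl⟩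
    refine ⟨p, PNat.eq ?_⟩
    rw [aux_c1]; omega
theorem aux_e2 (m : ℕ+) : (∃ n : ℕ+, m = 3 * n - 1) ↔ (m : ℕ) % 3 = 2 := by
  constructor
  · rintro ⟨n, rfl⟩
    have := n.pos
    rw [aux_c2]; omega
  · intro h
    obtain ⟨p, hp⟩ : ∃ p : ℕ+, (p : ℕ) = (m + 1) / 3 := ⟨Nat.toPNat _ (by omega), rfl⟩
    refine ⟨p, PNat.eq ?_⟩
    rw [aux_c2]; omega
theorem aux_e3 (m : ℕ+) : (∃ n : ℕ+, m = 3 * n) ↔ (m : ℕ) % 3 = 0 := by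
  constructor
  · rintro ⟨n, rfl⟩
    simp
  · intro h
    have := m.pos
    obtain ⟨p, hp⟩ : ∃ p : ℕ+, (p : ℕ) = m / 3 := ⟨Nat.toPNat _ (by omega), rfl⟩
    refine ⟨p, PNat.eq ?_⟩
    rw [PNat.mul_coe]
    change (m : ℕ) = 3 * p
    omega

theorem aux_i4 : Function.Injective (fun n : ℕ+ => 6 * n - 4) := by
  intro x y h
  have h1 := congrArg PNat.val h
  have h2 := aux_c4 x
  have h3 := aux_c4 y
  have := x.pos
  have := y.pos
  apply PNat.eq
  simp only at h1
  change ((6 * x - 4 : ℕ+) : ℕ) = ((6 * y - 4 : ℕ+) : ℕ) at h1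
  omega
theorem aux_i5 : Function.Injective (fun n : ℕ+ => 6 * n - 3) := by
  intro x y h
  have h1 := congrArg PNat.val h
  have h2 := aux_c5 x
  have h3 := aux_c5 y
  have := x.pos
  have := y.pos
  apply PNat.eq
  change ((6 * x - 3 : ℕ+) : ℕ) = ((6 * y - 3 : ℕ+) : ℕ) at h1
  omega

theorem aux_ext (T : H →L[ℂ] H)
    (h : ∀ k m, inner ℂ (e k) (T (e m)) = inner ℂ (e k) (e m)) : T = 1 := by
  have key : ∀ m, T (e m) = e m := by
    intro m
    apply lp.ext
    funext k
    have := h k m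
    have hc : ∀ v : H, inner ℂ (e k) v = v k := by
      intro v
      unfold e
      rw [lp.inner_single_left]
      simp
    rwa [hc, hc] at this
  apply lp.ext_continuousLinearMap (by simp)
  intro m
  ext1
  simpa [e] using key m

/-- Choi–Kraus normalization for the second Hamiltonian path `P₂ = (f, j, h)` of `G(Π₂)`:
`S_f* S_f + S_j* S_j + S_h* S_h = 1`. -/
theorem stmt_3
    (Sf Sj Sh : H →L[ℂ] H)
    (hSf : MapsBasis Sf (fun n => 3 * n - 2) (fun n => 6 * n - 4))
    (hSj : MapsBasis Sj (fun n => 3 * n - 1) (fun n => 6 * n - 3))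
    (hSh : MapsBasis Sh (fun n => 3 * n) (fun n => 6 * n - 3)) :
    adjoint Sf ∘L Sf + adjoint Sj ∘L Sj + adjoint Sh ∘L Sh = 1 := by
  apply aux_ext
  intro k m
  simp only [ContinuousLinearMap.add_apply, ContinuousLinearMap.comp_apply, inner_add_right,
    ContinuousLinearMap.adjoint_inner_right]
  rw [aux_inner Sf _ _ hSf aux_i4, aux_inner Sj _ _ hSj aux_i5, aux_inner Sh _ _ hSh aux_i5,
    aux_inner_e]
  simp only [aux_e1, aux_e2, aux_e3]
  by_cases hkm : k = m
  · have h3 : (m : ℕ) % 3 = 0 ∨ (m : ℕ) % 3 = 1 ∨ (m : ℕ) % 3 = 2 := by omega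
    rcases h3 with h | h | h <;> simp [hkm, h]
  · simp [hkm]
end
end

section
/- The smallest closed star-subalgebra of the algebra of bounded operators on H containing the six operators S_e, S_f, S_g, S_h, S_i, S_j is infinite-dimensional as a complex vector space (i.e., the graph C*-algebra C*(Π₂) generated by this Cuntz–Krieger family is infinite-dimensional). -/
/- Hilbert space `H = ℓ²(ℕ₊, ℂ)` with standard orthonormal basis `(e m)` indexed by the
positive integers `ℕ+`. -/

noncomputable section

open ContinuousLinearMap

theorem e_orthonormal : Orthonormal ℂ e := by
  classical
  rw [orthonormal_iff_ite]
  intro i j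
  unfold e
  rw [lp.inner_single_left, lp.single_apply]
  by_cases h : i = j
  · subst h
    simp
  · simp [h]

theorem pow_apply_e (S : H →L[ℂ] H)
    (hS : MapsBasis S (fun n => 3 * n) (fun n => 6 * n - 3)) (k : ℕ) :
    (S ^ k) (e 6) = e (3 * (2 ^ k + 1)) := by
  induction k with
  | zero => rfl
  | succ k ih =>
    rw [pow_succ', mul_apply_eq_comp, ih]
    refine (hS.1 _).trans (congrArg e ?_)
    have hlt : (3 : ℕ+) < 6 * (2 ^ k + 1) := by
      rw [← PNat.coe_lt_coe]
      push_cast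
      have := Nat.one_le_two_pow (n := k)
      omega
    apply PNat.eq
    rw [PNat.sub_coe, if_pos hlt]
    push_cast
    rw [pow_succ]
    omega

/-- The smallest closed star-subalgebra of `B(H)` containing the six operators of the
Cuntz–Krieger `G(Π₂)`-family (i.e. the graph C*-algebra `C*(Π₂)`) is infinite-dimensional
over `ℂ`. -/
theorem stmt_8
    (Se Sf Sg Sh Si Sj : H →L[ℂ] H)
    (hSe : MapsBasis Se (fun n => 3 * n - 2) (fun n => 6 * n))
    (hSf : MapsBasis Sf (fun n => 3 * n - 2) (fun n => 6 * n - 4))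
    (hSg : MapsBasis Sg (fun n => 3 * n - 1) (fun n => 6 * n - 4))
    (hSh : MapsBasis Sh (fun n => 3 * n) (fun n => 6 * n - 3))
    (hSi : MapsBasis Si (fun n => 3 * n) (fun n => 6 * n - 1))
    (hSj : MapsBasis Sj (fun n => 3 * n - 1) (fun n => 6 * n - 3)) :
    ¬ FiniteDimensional ℂ
      ((StarAlgebra.adjoin ℂ ({Se, Sf, Sg, Sh, Si, Sj} : Set (H →L[ℂ] H))).topologicalClosure) := by
  intro hfin
  set A := (StarAlgebra.adjoin ℂ
    ({Se, Sf, Sg, Sh, Si, Sj} : Set (H →L[ℂ] H))).topologicalClosure with hA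
  have hmem : Sh ∈ A :=
    StarSubalgebra.le_topologicalClosure _ (StarAlgebra.subset_adjoin ℂ _ (by simp))
  have hmemk : ∀ k : ℕ, Sh ^ k ∈ A := fun k => pow_mem hmem k
  let T : ℕ → A := fun k => ⟨Sh ^ k, hmemk k⟩
  let φ : A →ₗ[ℂ] H :=
    { toFun := fun a => (a : H →L[ℂ] H) (e 6)
      map_add' := fun a b => rfl
      map_smul' := fun c a => rfl }
  have hinj : Function.Injective (fun k : ℕ => (3 * (2 ^ k + 1) : ℕ+)) := by
    intro a b hab
    have h := congrArg (fun x : ℕ+ => (x : ℕ)) hab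
    simp only [PNat.mul_coe, PNat.add_coe, PNat.pow_coe] at h
    apply Nat.pow_right_injective (le_refl 2)
    have h3 : ((3 : ℕ+) : ℕ) = 3 := rfl
    have h2 : ((2 : ℕ+) : ℕ) = 2 := rfl
    rw [h3, h2] at h
    change 2 ^ a = 2 ^ b
    omega
  have hli : LinearIndependent ℂ (φ ∘ T) := by
    have h := e_orthonormal.linearIndependent.comp _ hinj
    have heq : φ ∘ T = e ∘ (fun k : ℕ => (3 * (2 ^ k + 1) : ℕ+)) :=
      funext fun k => pow_apply_e Sh hSh k
    rw [heq]
    exact h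
  have hT : LinearIndependent ℂ T := LinearIndependent.of_comp φ hli
  have := hT.finite
  exact not_finite ℕ
end
end

section
/- Each of the eight operators S_{g1}, …, S_{g8} is a partial isometry (S S* S = S), and together they satisfy the Choi–Kraus normalization Σ_{k=1}^{8} S_{gk}* S_{gk} = 1, where 1 is the identity operator on H (this is the quantum-channel condition for the Hamiltonian path H₃ of G(Π₃)). -/
/- Hilbert space `H = ℓ²(ℕ₊, ℂ)` with standard orthonormal basis `(e m)` indexed by the
positive integers `ℕ+`. -/

noncomputable section

open ContinuousLinearMap

lemma inner_e (k m : ℕ+) : inner ℂ (e k) (e m) = if k = m then (1:ℂ) else 0 := by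
  unfold e
  rw [lp.inner_single_left]
  by_cases h : k = m
  · subst h; simp
  · simp [h]

lemma ext_inner_e {x y : H} (h : ∀ k, inner ℂ (e k) x = inner ℂ (e k) y) : x = y := by
  ext k
  have := h k
  unfold e at this
  rw [lp.inner_single_left, lp.inner_single_left] at this
  simpa using this

lemma ext_clm_e {A B : H →L[ℂ] H} (h : ∀ m, A (e m) = B (e m)) : A = B := by
  have h2 : ∀ y, adjoint A y = adjoint B y := by
    intro y
    apply ext_inner_e
    intro k
    rw [adjoint_inner_right, adjoint_inner_right, h k]
  have h3 : adjoint A = adjoint B := ContinuousLinearMap.ext h2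
  rw [← adjoint_adjoint A, h3, adjoint_adjoint]

lemma star_mul_range {S : H →L[ℂ] H} {a b : ℕ+ → ℕ+} (h : MapsBasis S a b)
    (hb : Function.Injective b) (n : ℕ+) : adjoint S (S (e (a n))) = e (a n) := by
  apply ext_inner_e
  intro k
  rw [adjoint_inner_right, h.1 n]
  by_cases hk : ∃ j, k = a j
  · obtain ⟨j, rfl⟩ := hk
    rw [h.1 j, inner_e, inner_e]
    by_cases hj : j = n
    · subst hj; simp
    · rw [if_neg (fun hh => hj (hb hh)), if_neg]
      intro hh
      have h1 := h.1 j
      rw [hh, h.1 n] at h1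
      have h2 := inner_e (b j) (b n)
      rw [h1, inner_e, if_pos rfl, if_neg (fun hh => hj (hb hh))] at h2
      exact one_ne_zero h2
  · push Not at hk
    rw [h.2 k hk, inner_e, if_neg (hk n), inner_zero_left]

lemma partial_isom {S : H →L[ℂ] H} {a b : ℕ+ → ℕ+} (h : MapsBasis S a b)
    (hb : Function.Injective b) : S ∘L adjoint S ∘L S = S := by
  apply ext_clm_e
  intro m
  simp only [ContinuousLinearMap.comp_apply]
  by_cases hk : ∃ j, m = a j
  · obtain ⟨j, rfl⟩ := hk
    rw [star_mul_range h hb]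
  · push Not at hk
    rw [h.2 m hk]; simp

lemma star_mul_residue {S : H →L[ℂ] H} {a b : ℕ+ → ℕ+} (h : MapsBasis S a b)
    (hb : Function.Injective b) (r : ℕ) (hr : r < 8)
    (ha : ∀ n, (a n : ℕ) + r = 8 * n) (m : ℕ+) :
    adjoint S (S (e m)) = if ((m : ℕ) + r) % 8 = 0 then e m else 0 := by
  split_ifs with hm
  · have hp : 0 < ((m : ℕ) + r) / 8 := by have := m.pos; omega
    have : m = a ⟨((m : ℕ) + r) / 8, hp⟩ := by
      apply PNat.eq
      have := ha ⟨((m : ℕ) + r) / 8, hp⟩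
      simp only [PNat.mk_coe] at this
      omega
    rw [this]
    exact star_mul_range h hb _
  · rw [h.2 m, map_zero]
    intro n hn
    have := ha n
    rw [← hn] at this
    omega

lemma sub_cast (c d n : ℕ+) (h : d < c) : ((c * n - d : ℕ+) : ℕ) + d = c * n := by
  have h1 : d < c * n := lt_of_lt_of_le h (le_mul_of_one_le_right' n.one_le)
  rw [PNat.sub_coe, if_pos h1]
  have h2 : (d : ℕ) < ((c * n : ℕ+) : ℕ) := h1
  rw [Nat.sub_add_cancel h2.le, PNat.mul_coe]

lemma sub_inj (c d : ℕ+) (h : d < c) : Function.Injective (fun n : ℕ+ => c * n - d) := by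
  intro x y hxy
  have h1 := sub_cast c d x h
  have h2 := sub_cast c d y h
  simp only at hxy
  rw [hxy, h2] at h1
  exact PNat.eq (Nat.eq_of_mul_eq_mul_left c.pos h1.symm)

/-- Each of `S_{g1}, …, S_{g8}` is a partial isometry and `Σₖ S_{gk}* S_{gk} = 1` (the quantum-channel condition for the Hamiltonian path `H₃` of `G(Π₃)`). -/
theorem stmt_12
    (Sg1 Sg2 Sg3 Sg4 Sg5 Sg6 Sg7 Sg8 : H →L[ℂ] H)
    (hSg1 : MapsBasis Sg1 (fun n => 8 * n - 1) (fun n => 32 * n - 23))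
    (hSg2 : MapsBasis Sg2 (fun n => 8 * n) (fun n => 40 * n - 25))
    (hSg3 : MapsBasis Sg3 (fun n => 8 * n - 3) (fun n => 40 * n - 24))
    (hSg4 : MapsBasis Sg4 (fun n => 8 * n - 2) (fun n => 48 * n - 35))
    (hSg5 : MapsBasis Sg5 (fun n => 8 * n - 4) (fun n => 48 * n - 34))
    (hSg6 : MapsBasis Sg6 (fun n => 8 * n - 5) (fun n => 24 * n - 14))
    (hSg7 : MapsBasis Sg7 (fun n => 8 * n - 6) (fun n => 32 * n - 20))
    (hSg8 : MapsBasis Sg8 (fun n => 8 * n - 7) (fun n => 24 * n - 13)) :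
    (Sg1 ∘L adjoint Sg1 ∘L Sg1 = Sg1 ∧
    Sg2 ∘L adjoint Sg2 ∘L Sg2 = Sg2 ∧
    Sg3 ∘L adjoint Sg3 ∘L Sg3 = Sg3 ∧
    Sg4 ∘L adjoint Sg4 ∘L Sg4 = Sg4 ∧
    Sg5 ∘L adjoint Sg5 ∘L Sg5 = Sg5 ∧
    Sg6 ∘L adjoint Sg6 ∘L Sg6 = Sg6 ∧
    Sg7 ∘L adjoint Sg7 ∘L Sg7 = Sg7 ∧
    Sg8 ∘L adjoint Sg8 ∘L Sg8 = Sg8) ∧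
    adjoint Sg1 ∘L Sg1 + adjoint Sg2 ∘L Sg2 + adjoint Sg3 ∘L Sg3 + adjoint Sg4 ∘L Sg4 + adjoint Sg5 ∘L Sg5 + adjoint Sg6 ∘L Sg6 + adjoint Sg7 ∘L Sg7 + adjoint Sg8 ∘L Sg8 = 1 := by
  have i1 := sub_inj 32 23 (by decide)
  have i2 := sub_inj 40 25 (by decide)
  have i3 := sub_inj 40 24 (by decide)
  have i4 := sub_inj 48 35 (by decide)
  have i5 := sub_inj 48 34 (by decide)
  have i6 := sub_inj 24 14 (by decide)
  have i7 := sub_inj 32 20 (by decide)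
  have i8 := sub_inj 24 13 (by decide)
  refine ⟨⟨partial_isom hSg1 i1, partial_isom hSg2 i2, partial_isom hSg3 i3, partial_isom hSg4 i4, partial_isom hSg5 i5, partial_isom hSg6 i6, partial_isom hSg7 i7, partial_isom hSg8 i8⟩, ?_⟩
  apply ext_clm_e
  intro m
  simp only [ContinuousLinearMap.add_apply, ContinuousLinearMap.comp_apply, ContinuousLinearMap.one_apply]
  rw [star_mul_residue hSg1 i1 1 (by norm_num) (fun n => sub_cast 8 1 n (by decide)) m]
  rw [star_mul_residue hSg2 i2 0 (by norm_num) (fun n => by simp) m]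
  rw [star_mul_residue hSg3 i3 3 (by norm_num) (fun n => sub_cast 8 3 n (by decide)) m]
  rw [star_mul_residue hSg4 i4 2 (by norm_num) (fun n => sub_cast 8 2 n (by decide)) m]
  rw [star_mul_residue hSg5 i5 4 (by norm_num) (fun n => sub_cast 8 4 n (by decide)) m]
  rw [star_mul_residue hSg6 i6 5 (by norm_num) (fun n => sub_cast 8 5 n (by decide)) m]
  rw [star_mul_residue hSg7 i7 6 (by norm_num) (fun n => sub_cast 8 6 n (by decide)) m]
  rw [star_mul_residue hSg8 i8 7 (by norm_num) (fun n => sub_cast 8 7 n (by decide)) m]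
  have hlt : (m : ℕ) % 8 < 8 := Nat.mod_lt _ (by norm_num)
  simp only [Nat.add_mod (m : ℕ)]
  generalize (m : ℕ) % 8 = q at hlt
  interval_cases q <;> simp
end
end

section
/- The smallest closed star-subalgebra of the algebra of bounded operators on H containing the eight operators S_{e1}, …, S_{e8} is infinite-dimensional as a complex vector space (so the graph C*-algebra C*(Π₃) generated by the Cuntz–Krieger G(Π₃)-family is infinite-dimensional). -/
/- Hilbert space `H = ℓ²(ℕ₊, ℂ)` with standard orthonormal basis `(e m)` indexed by the
positive integers `ℕ+`. -/

noncomputable section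

open ContinuousLinearMap

lemma mb_exists (S : H →L[ℂ] H) (k p q : ℕ) (a b : ℕ+ → ℕ+) (h : MapsBasis S a b)
    (ha : ∀ n : ℕ+, (a n : ℕ) = 8 * n - k) (hb : ∀ n : ℕ+, (b n : ℕ) = p * n - q)
    (hk : k < 8) (hp : 24 ≤ p) (hq : q + 16 < 2 * p + k) (m : ℕ+) (hm : 9 ≤ (m : ℕ)) :
    (((m : ℕ) + k) % 8 = 0 → ∃ m' : ℕ+, m < m' ∧ S (e m) = e m') ∧
    (((m : ℕ) + k) % 8 ≠ 0 → S (e m) = 0) := by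
  constructor
  · intro h0
    have hpos : 0 < ((m : ℕ) + k) / 8 := by omega
    set n : ℕ+ := ⟨((m : ℕ) + k) / 8, hpos⟩ with hn
    have hnv : (n : ℕ) = ((m : ℕ) + k) / 8 := rfl
    have hm' : m = a n := by
      apply PNat.coe_injective
      rw [ha, hnv]; omega
    refine ⟨b n, ?_, ?_⟩
    · rw [← PNat.coe_lt_coe, hb]
      have h2 : 2 ≤ (n : ℕ) := by omega
      have h3 : (m : ℕ) + k = 8 * n := by omega
      have h4 : (m : ℕ) + q < p * n := by
        obtain ⟨p', rfl⟩ := Nat.exists_eq_add_of_le hp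
        nlinarith
      omega
    · rw [hm']; exact h.1 n
  · intro h0
    apply h.2
    intro n hn
    apply h0
    have := congrArg (fun x : ℕ+ => (x : ℕ)) hn
    simp only [ha] at this
    have := n.pos
    omega

lemma e_linInd : LinearIndependent ℂ e := by
  rw [linearIndependent_iff']
  intro s g hg i hi
  let ev : H →ₗ[ℂ] ℂ :=
    { toFun := fun x => x i
      map_add' := fun _ _ => rfl
      map_smul' := fun _ _ => rfl }
  have hev : ∀ m, ev (e m) = if i = m then 1 else 0 := by
    intro m
    change (lp.single 2 m (1 : ℂ) : H) i = _
    rw [lp.single_apply, Pi.single_apply]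
  have h1 := congrArg ev hg
  simpa [map_sum, hev, hi] using h1

/-- The smallest closed star-subalgebra of `B(H)` containing the eight operators
`S_{e1}, …, S_{e8}` is infinite-dimensional over `ℂ`. -/
theorem stmt_18
    (Se1 Se2 Se3 Se4 Se5 Se6 Se7 Se8 : H →L[ℂ] H)
    (hSe1 : MapsBasis Se1 (fun n => 8 * n) (fun n => 32 * n - 31))
    (hSe2 : MapsBasis Se2 (fun n => 8 * n - 1) (fun n => 40 * n - 32))
    (hSe3 : MapsBasis Se3 (fun n => 8 * n - 2) (fun n => 40 * n - 33))
    (hSe4 : MapsBasis Se4 (fun n => 8 * n - 3) (fun n => 48 * n - 42))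
    (hSe5 : MapsBasis Se5 (fun n => 8 * n - 4) (fun n => 48 * n - 43))
    (hSe6 : MapsBasis Se6 (fun n => 8 * n - 5) (fun n => 32 * n - 28))
    (hSe7 : MapsBasis Se7 (fun n => 8 * n - 6) (fun n => 24 * n - 21))
    (hSe8 : MapsBasis Se8 (fun n => 8 * n - 7) (fun n => 24 * n - 22)) :
    ¬ FiniteDimensional ℂ
      ((StarAlgebra.adjoin ℂ
        ({Se1, Se2, Se3, Se4, Se5, Se6, Se7, Se8} : Set (H →L[ℂ] H))).topologicalClosure) := by
  have h1 := mb_exists Se1 0 32 31 _ _ hSe1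
    (fun n => by have := n.pos; simp [PNat.sub_coe, ← PNat.coe_lt_coe]; try omega)
    (fun n => by have := n.pos; simp [PNat.sub_coe, ← PNat.coe_lt_coe]; try omega)
    (by norm_num) (by norm_num) (by norm_num)
  have h2 := mb_exists Se2 1 40 32 _ _ hSe2
    (fun n => by have := n.pos; simp [PNat.sub_coe, ← PNat.coe_lt_coe]; try omega)
    (fun n => by have := n.pos; simp [PNat.sub_coe, ← PNat.coe_lt_coe]; try omega)
    (by norm_num) (by norm_num) (by norm_num)
  have h3 := mb_exists Se3 2 40 33 _ _ hSe3
    (fun n => by have := n.pos; simp [PNat.sub_coe, ← PNat.coe_lt_coe]; try omega)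
    (fun n => by have := n.pos; simp [PNat.sub_coe, ← PNat.coe_lt_coe]; try omega)
    (by norm_num) (by norm_num) (by norm_num)
  have h4 := mb_exists Se4 3 48 42 _ _ hSe4
    (fun n => by have := n.pos; simp [PNat.sub_coe, ← PNat.coe_lt_coe]; try omega)
    (fun n => by have := n.pos; simp [PNat.sub_coe, ← PNat.coe_lt_coe]; try omega)
    (by norm_num) (by norm_num) (by norm_num)
  have h5 := mb_exists Se5 4 48 43 _ _ hSe5
    (fun n => by have := n.pos; simp [PNat.sub_coe, ← PNat.coe_lt_coe]; try omega)
    (fun n => by have := n.pos; simp [PNat.sub_coe, ← PNat.coe_lt_coe]; try omega)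
    (by norm_num) (by norm_num) (by norm_num)
  have h6 := mb_exists Se6 5 32 28 _ _ hSe6
    (fun n => by have := n.pos; simp [PNat.sub_coe, ← PNat.coe_lt_coe]; try omega)
    (fun n => by have := n.pos; simp [PNat.sub_coe, ← PNat.coe_lt_coe]; try omega)
    (by norm_num) (by norm_num) (by norm_num)
  have h7 := mb_exists Se7 6 24 21 _ _ hSe7
    (fun n => by have := n.pos; simp [PNat.sub_coe, ← PNat.coe_lt_coe]; try omega)
    (fun n => by have := n.pos; simp [PNat.sub_coe, ← PNat.coe_lt_coe]; try omega)
    (by norm_num) (by norm_num) (by norm_num)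
  have h8 := mb_exists Se8 7 24 22 _ _ hSe8
    (fun n => by have := n.pos; simp [PNat.sub_coe, ← PNat.coe_lt_coe]; try omega)
    (fun n => by have := n.pos; simp [PNat.sub_coe, ← PNat.coe_lt_coe]; try omega)
    (by norm_num) (by norm_num) (by norm_num)
  have key : ∀ m : ℕ+, 9 ≤ (m : ℕ) → ∃ m' : ℕ+, m < m' ∧
      (Se1 + Se2 + Se3 + Se4 + Se5 + Se6 + Se7 + Se8) (e m) = e m' := by
    intro m hm
    simp only [add_apply]
    obtain ⟨a1, b1⟩ := h1 m hm
    obtain ⟨a2, b2⟩ := h2 m hm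
    obtain ⟨a3, b3⟩ := h3 m hm
    obtain ⟨a4, b4⟩ := h4 m hm
    obtain ⟨a5, b5⟩ := h5 m hm
    obtain ⟨a6, b6⟩ := h6 m hm
    obtain ⟨a7, b7⟩ := h7 m hm
    obtain ⟨a8, b8⟩ := h8 m hm
    have hr : (m : ℕ) % 8 < 8 := Nat.mod_lt _ (by norm_num)
    have hc : ((m : ℕ) + 0) % 8 = 0 ∨ ((m : ℕ) + 1) % 8 = 0 ∨ ((m : ℕ) + 2) % 8 = 0 ∨ ((m : ℕ) + 3) % 8 = 0 ∨ ((m : ℕ) + 4) % 8 = 0 ∨ ((m : ℕ) + 5) % 8 = 0 ∨ ((m : ℕ) + 6) % 8 = 0 ∨ ((m : ℕ) + 7) % 8 = 0 := by omega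
    rcases hc with hc | hc | hc | hc | hc | hc | hc | hc
    · obtain ⟨m', hlt, hx⟩ := a1 hc
      refine ⟨m', hlt, ?_⟩
      rw [hx, b2 (by omega), b3 (by omega), b4 (by omega), b5 (by omega), b6 (by omega), b7 (by omega), b8 (by omega)]
      simp
    · obtain ⟨m', hlt, hx⟩ := a2 hc
      refine ⟨m', hlt, ?_⟩
      rw [hx, b1 (by omega), b3 (by omega), b4 (by omega), b5 (by omega), b6 (by omega), b7 (by omega), b8 (by omega)]
      simp
    · obtain ⟨m', hlt, hx⟩ := a3 hc
      refine ⟨m', hlt, ?_⟩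
      rw [hx, b1 (by omega), b2 (by omega), b4 (by omega), b5 (by omega), b6 (by omega), b7 (by omega), b8 (by omega)]
      simp
    · obtain ⟨m', hlt, hx⟩ := a4 hc
      refine ⟨m', hlt, ?_⟩
      rw [hx, b1 (by omega), b2 (by omega), b3 (by omega), b5 (by omega), b6 (by omega), b7 (by omega), b8 (by omega)]
      simp
    · obtain ⟨m', hlt, hx⟩ := a5 hc
      refine ⟨m', hlt, ?_⟩
      rw [hx, b1 (by omega), b2 (by omega), b3 (by omega), b4 (by omega), b6 (by omega), b7 (by omega), b8 (by omega)]
      simp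
    · obtain ⟨m', hlt, hx⟩ := a6 hc
      refine ⟨m', hlt, ?_⟩
      rw [hx, b1 (by omega), b2 (by omega), b3 (by omega), b4 (by omega), b5 (by omega), b7 (by omega), b8 (by omega)]
      simp
    · obtain ⟨m', hlt, hx⟩ := a7 hc
      refine ⟨m', hlt, ?_⟩
      rw [hx, b1 (by omega), b2 (by omega), b3 (by omega), b4 (by omega), b5 (by omega), b6 (by omega), b8 (by omega)]
      simp
    · obtain ⟨m', hlt, hx⟩ := a8 hc
      refine ⟨m', hlt, ?_⟩
      rw [hx, b1 (by omega), b2 (by omega), b3 (by omega), b4 (by omega), b5 (by omega), b6 (by omega), b7 (by omega)]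
      simp
  set T : H →L[ℂ] H := Se1 + Se2 + Se3 + Se4 + Se5 + Se6 + Se7 + Se8 with hT
  set A := (StarAlgebra.adjoin ℂ
        ({Se1, Se2, Se3, Se4, Se5, Se6, Se7, Se8} : Set (H →L[ℂ] H))).topologicalClosure with hA
  have hsub : ∀ x ∈ ({Se1, Se2, Se3, Se4, Se5, Se6, Se7, Se8} : Set (H →L[ℂ] H)), x ∈ A :=
    fun x hx => StarSubalgebra.le_topologicalClosure _ (StarAlgebra.subset_adjoin ℂ _ hx)
  have hTA : T ∈ A := by
    rw [hT]
    repeat' apply add_mem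
    all_goals exact hsub _ (by simp)
  choose! f hf1 hf2 using key
  have hit : ∀ k : ℕ, 9 ≤ ((f^[k] 9 : ℕ+) : ℕ) ∧ (T ^ k) (e 9) = e (f^[k] 9) := by
    intro k
    induction k with
    | zero => simp
    | succ k ih =>
      rw [Function.iterate_succ_apply', pow_succ', mul_apply_eq_comp, ih.2]
      refine ⟨?_, hf2 _ ih.1⟩
      have h := PNat.coe_lt_coe _ _ |>.2 (hf1 _ ih.1)
      have := ih.1
      omega
  have hmono : StrictMono (fun k : ℕ => f^[k] 9) := by
    apply strictMono_nat_of_lt_succ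
    intro k
    rw [Function.iterate_succ_apply']
    exact hf1 _ (hit k).1
  have hli : LinearIndependent ℂ (fun k : ℕ => (T ^ k) (e 9)) := by
    have : (fun k : ℕ => (T ^ k) (e 9)) = e ∘ (fun k : ℕ => f^[k] 9) := by
      funext k; exact (hit k).2
    rw [this]
    exact e_linInd.comp _ hmono.injective
  intro hfin
  let ev : A →ₗ[ℂ] H :=
    { toFun := fun x => (x : H →L[ℂ] H) (e 9)
      map_add' := fun _ _ => rfl
      map_smul' := fun _ _ => rfl }
  have hli2 : LinearIndependent ℂ (fun k : ℕ => (⟨T ^ k, pow_mem hTA k⟩ : A)) :=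
    LinearIndependent.of_comp ev hli
  have := hli2.finite
  exact not_finite ℕ
end
end

section
/- The six quantum channels associated to the six Hamiltonian paths of G(Π₃) are pairwise distinct: the six maps Ψ_e(X) = Σ_{k=1}^{8} S_{ek} X S_{ek}*, Ψ_f(X) = Σ_{k=1}^{5} S_{ek} X S_{ek}* + Σ_{k=6}^{8} S_{gk} X S_{gk}*, Ψ_g(X) = Σ_{k=1}^{8} S_{gk} X S_{gk}*, Ψ_h(X) = Σ_{k=1}^{5} S_{gk} X S_{gk}* + Σ_{k=6}^{8} S_{ek} X S_{ek}*, Ψ_i(X) = Σ_{k=1}^{8} S_{ik} X S_{ik}*, and Ψ_j(X) = Σ_{k=1}^{8} S_{jk} X S_{jk}*, defined on bounded operators X on H, are pairwise unequal as maps. -/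
/- Hilbert space `H = ℓ²(ℕ₊, ℂ)` with standard orthonormal basis `(e m)` indexed by the
positive integers `ℕ+`. -/

noncomputable section

open ContinuousLinearMap

set_option linter.unusedSimpArgs false


/-- The rank-one projection `E_{c,c}`. -/
def proj1 (c : ℕ+) : H →L[ℂ] H := (innerSL ℂ (e c)).smulRight (e c)

theorem proj1_apply (c : ℕ+) (y : H) : proj1 c y = inner ℂ (e c) y • e c := rfl

theorem inner_e_self (c : ℕ+) : inner ℂ (e c) (e c) = (1 : ℂ) := by
  simp [e, lp.inner_single_left]

theorem inner_e_ne {c d : ℕ+} (h : c ≠ d) : inner ℂ (e c) (e d) = (0 : ℂ) := by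
  simp [e, lp.inner_single_left, h]

theorem proj1_ne {c d : ℕ+} (h : c ≠ d) : proj1 c ≠ proj1 d := by
  intro hh
  have h1 := congrArg (fun T : H →L[ℂ] H => inner ℂ (e c) (T (e c))) hh
  simp only [proj1_apply, inner_smul_right, inner_e_self, inner_e_ne h] at h1
  norm_num at h1

theorem conj_zero {S : H →L[ℂ] H} {c : ℕ+} (h : S (e c) = 0) :
    S ∘L proj1 c ∘L adjoint S = 0 := by
  ext1 y
  simp [proj1_apply, h]

theorem conj_e {S : H →L[ℂ] H} {c b : ℕ+} (h : S (e c) = e b) :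
    S ∘L proj1 c ∘L adjoint S = proj1 b := by
  ext1 y
  simp [proj1_apply, h, adjoint_inner_right]

theorem conj_sub8 {S : H →L[ℂ] H} {k : ℕ+} {b : ℕ+ → ℕ+} (hS : MapsBasis S (fun n => 8 * n - k) b)
    (c : ℕ+) (hk : (k : ℕ) < 8) (hc : ((c : ℕ) + k) % 8 ≠ 0) :
    S ∘L proj1 c ∘L adjoint S = 0 := by
  refine conj_zero (hS.2 c fun n hn => hc ?_)
  have h1 := congrArg PNat.val hn
  have hn0 := n.pos
  have hlt : k < 8 * n := by
    rw [← PNat.coe_lt_coe, PNat.mul_coe]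
    change (k : ℕ) < 8 * n
    omega
  simp only [PNat.val_ofNat, PNat.sub_coe, if_pos hlt, PNat.mul_coe] at h1
  change (c : ℕ) = 8 * (n : ℕ) - k at h1
  omega

theorem conj_mul8 {S : H →L[ℂ] H} {b : ℕ+ → ℕ+} (hS : MapsBasis S (fun n => 8 * n) b)
    (c : ℕ+) (hc : (c : ℕ) % 8 ≠ 0) :
    S ∘L proj1 c ∘L adjoint S = 0 := by
  refine conj_zero (hS.2 c fun n hn => hc ?_)
  have h1 := congrArg PNat.val hn
  change (c : ℕ) = 8 * (n : ℕ) at h1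
  omega

theorem val_one {S : H →L[ℂ] H} {a b : ℕ+ → ℕ+} (hS : MapsBasis S a b)
    (c d : ℕ+) (hc : a 1 = c) (hd : b 1 = d) :
    S ∘L proj1 c ∘L adjoint S = proj1 d := by
  subst hc hd
  exact conj_e (hS.1 1)

set_option maxHeartbeats 1000000 in
/-- The six quantum channels associated to the six Hamiltonian paths of `G(Π₃)` are pairwise
distinct as maps on bounded operators (here `S_{i2} = S_{e4}`, `S_{i4} = S_{g2}`,
`S_{i6} = S_{e6}`, `S_{i7} = S_{e7}`, `S_{i8} = S_{e8}`, `S_{j2} = S_{g4}`,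
`S_{j4} = S_{e2}`, `S_{j6} = S_{e6}`, `S_{j7} = S_{e7}`, `S_{j8} = S_{e8}`). -/
theorem stmt_19
    (Se1 Se2 Se3 Se4 Se5 Se6 Se7 Se8 Sg1 Sg2 Sg3 Sg4 Sg5 Sg6 Sg7 Sg8 Si1 Si3 Si5 Sj1 Sj3 Sj5 : H →L[ℂ] H)
    (hSe1 : MapsBasis Se1 (fun n => 8 * n) (fun n => 32 * n - 31))
    (hSe2 : MapsBasis Se2 (fun n => 8 * n - 1) (fun n => 40 * n - 32))
    (hSe3 : MapsBasis Se3 (fun n => 8 * n - 2) (fun n => 40 * n - 33))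
    (hSe4 : MapsBasis Se4 (fun n => 8 * n - 3) (fun n => 48 * n - 42))
    (hSe5 : MapsBasis Se5 (fun n => 8 * n - 4) (fun n => 48 * n - 43))
    (hSe6 : MapsBasis Se6 (fun n => 8 * n - 5) (fun n => 32 * n - 28))
    (hSe7 : MapsBasis Se7 (fun n => 8 * n - 6) (fun n => 24 * n - 21))
    (hSe8 : MapsBasis Se8 (fun n => 8 * n - 7) (fun n => 24 * n - 22))
    (hSg1 : MapsBasis Sg1 (fun n => 8 * n - 1) (fun n => 32 * n - 23))
    (hSg2 : MapsBasis Sg2 (fun n => 8 * n) (fun n => 40 * n - 25))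
    (hSg3 : MapsBasis Sg3 (fun n => 8 * n - 3) (fun n => 40 * n - 24))
    (hSg4 : MapsBasis Sg4 (fun n => 8 * n - 2) (fun n => 48 * n - 35))
    (hSg5 : MapsBasis Sg5 (fun n => 8 * n - 4) (fun n => 48 * n - 34))
    (hSg6 : MapsBasis Sg6 (fun n => 8 * n - 5) (fun n => 24 * n - 14))
    (hSg7 : MapsBasis Sg7 (fun n => 8 * n - 6) (fun n => 32 * n - 20))
    (hSg8 : MapsBasis Sg8 (fun n => 8 * n - 7) (fun n => 24 * n - 13))
    (hSi1 : MapsBasis Si1 (fun n => 8 * n - 2) (fun n => 32 * n - 7))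
    (hSi3 : MapsBasis Si3 (fun n => 8 * n - 1) (fun n => 48 * n - 27))
    (hSi5 : MapsBasis Si5 (fun n => 8 * n - 4) (fun n => 40 * n - 8))
    (hSj1 : MapsBasis Sj1 (fun n => 8 * n - 3) (fun n => 32 * n - 15))
    (hSj3 : MapsBasis Sj3 (fun n => 8 * n) (fun n => 48 * n - 10))
    (hSj5 : MapsBasis Sj5 (fun n => 8 * n - 4) (fun n => 40 * n - 1)) :
    List.Pairwise (· ≠ ·)
      [fun X : H →L[ℂ] H =>
        Se1 ∘L X ∘L adjoint Se1 + Se2 ∘L X ∘L adjoint Se2 + Se3 ∘L X ∘L adjoint Se3 + Se4 ∘L X ∘L adjoint Se4 + Se5 ∘L X ∘L adjoint Se5 + Se6 ∘L X ∘L adjoint Se6 + Se7 ∘L X ∘L adjoint Se7 + Se8 ∘L X ∘L adjoint Se8,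
       fun X : H →L[ℂ] H =>
        Se1 ∘L X ∘L adjoint Se1 + Se2 ∘L X ∘L adjoint Se2 + Se3 ∘L X ∘L adjoint Se3 + Se4 ∘L X ∘L adjoint Se4 + Se5 ∘L X ∘L adjoint Se5 + Sg6 ∘L X ∘L adjoint Sg6 + Sg7 ∘L X ∘L adjoint Sg7 + Sg8 ∘L X ∘L adjoint Sg8,
       fun X : H →L[ℂ] H =>
        Sg1 ∘L X ∘L adjoint Sg1 + Sg2 ∘L X ∘L adjoint Sg2 + Sg3 ∘L X ∘L adjoint Sg3 + Sg4 ∘L X ∘L adjoint Sg4 + Sg5 ∘L X ∘L adjoint Sg5 + Sg6 ∘L X ∘L adjoint Sg6 + Sg7 ∘L X ∘L adjoint Sg7 + Sg8 ∘L X ∘L adjoint Sg8,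
       fun X : H →L[ℂ] H =>
        Sg1 ∘L X ∘L adjoint Sg1 + Sg2 ∘L X ∘L adjoint Sg2 + Sg3 ∘L X ∘L adjoint Sg3 + Sg4 ∘L X ∘L adjoint Sg4 + Sg5 ∘L X ∘L adjoint Sg5 + Se6 ∘L X ∘L adjoint Se6 + Se7 ∘L X ∘L adjoint Se7 + Se8 ∘L X ∘L adjoint Se8,
       fun X : H →L[ℂ] H =>
        Si1 ∘L X ∘L adjoint Si1 + Se4 ∘L X ∘L adjoint Se4 + Si3 ∘L X ∘L adjoint Si3 + Sg2 ∘L X ∘L adjoint Sg2 + Si5 ∘L X ∘L adjoint Si5 + Se6 ∘L X ∘L adjoint Se6 + Se7 ∘L X ∘L adjoint Se7 + Se8 ∘L X ∘L adjoint Se8,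
       fun X : H →L[ℂ] H =>
        Sj1 ∘L X ∘L adjoint Sj1 + Sg4 ∘L X ∘L adjoint Sg4 + Sj3 ∘L X ∘L adjoint Sj3 + Se2 ∘L X ∘L adjoint Se2 + Sj5 ∘L X ∘L adjoint Sj5 + Se6 ∘L X ∘L adjoint Se6 + Se7 ∘L X ∘L adjoint Se7 + Se8 ∘L X ∘L adjoint Se8] := by
  have e1c4 := conj_mul8 hSe1 4 (by decide)
  have e2c4 := conj_sub8 hSe2 4 (by decide) (by decide)
  have e3c4 := conj_sub8 hSe3 4 (by decide) (by decide)
  have e4c4 := conj_sub8 hSe4 4 (by decide) (by decide)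
  have e5c4 := val_one hSe5 4 5 (by decide) (by decide)
  have e6c4 := conj_sub8 hSe6 4 (by decide) (by decide)
  have e7c4 := conj_sub8 hSe7 4 (by decide) (by decide)
  have e8c4 := conj_sub8 hSe8 4 (by decide) (by decide)
  have g1c4 := conj_sub8 hSg1 4 (by decide) (by decide)
  have g2c4 := conj_mul8 hSg2 4 (by decide)
  have g3c4 := conj_sub8 hSg3 4 (by decide) (by decide)
  have g4c4 := conj_sub8 hSg4 4 (by decide) (by decide)
  have g5c4 := val_one hSg5 4 14 (by decide) (by decide)
  have g6c4 := conj_sub8 hSg6 4 (by decide) (by decide)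
  have g7c4 := conj_sub8 hSg7 4 (by decide) (by decide)
  have g8c4 := conj_sub8 hSg8 4 (by decide) (by decide)
  have i1c4 := conj_sub8 hSi1 4 (by decide) (by decide)
  have i3c4 := conj_sub8 hSi3 4 (by decide) (by decide)
  have i5c4 := val_one hSi5 4 32 (by decide) (by decide)
  have j1c4 := conj_sub8 hSj1 4 (by decide) (by decide)
  have j3c4 := conj_mul8 hSj3 4 (by decide)
  have j5c4 := val_one hSj5 4 39 (by decide) (by decide)
  have e1c3 := conj_mul8 hSe1 3 (by decide)
  have e2c3 := conj_sub8 hSe2 3 (by decide) (by decide)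
  have e3c3 := conj_sub8 hSe3 3 (by decide) (by decide)
  have e4c3 := conj_sub8 hSe4 3 (by decide) (by decide)
  have e5c3 := conj_sub8 hSe5 3 (by decide) (by decide)
  have e6c3 := val_one hSe6 3 4 (by decide) (by decide)
  have e7c3 := conj_sub8 hSe7 3 (by decide) (by decide)
  have e8c3 := conj_sub8 hSe8 3 (by decide) (by decide)
  have g1c3 := conj_sub8 hSg1 3 (by decide) (by decide)
  have g2c3 := conj_mul8 hSg2 3 (by decide)
  have g3c3 := conj_sub8 hSg3 3 (by decide) (by decide)
  have g4c3 := conj_sub8 hSg4 3 (by decide) (by decide)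
  have g5c3 := conj_sub8 hSg5 3 (by decide) (by decide)
  have g6c3 := val_one hSg6 3 10 (by decide) (by decide)
  have g7c3 := conj_sub8 hSg7 3 (by decide) (by decide)
  have g8c3 := conj_sub8 hSg8 3 (by decide) (by decide)
  simp only [List.pairwise_cons, List.mem_cons, List.not_mem_nil, or_false, forall_eq_or_imp,
    forall_eq, false_imp_iff, implies_true, List.Pairwise.nil, and_true]
  refine ⟨⟨?_, ?_, ?_, ?_, ?_⟩, ⟨?_, ?_, ?_, ?_⟩, ⟨?_, ?_, ?_⟩, ⟨?_, ?_⟩, ?_⟩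
  · intro h
    have h1 := congrFun h (proj1 3)
    simp only [e1c3, e2c3, e3c3, e4c3, e5c3, e6c3, e7c3, e8c3, g1c3, g2c3, g3c3, g4c3, g5c3, g6c3, g7c3, g8c3, zero_add, add_zero] at h1
    exact proj1_ne (c := 4) (d := 10) (by decide) h1
  · intro h
    have h1 := congrFun h (proj1 4)
    simp only [e1c4, e2c4, e3c4, e4c4, e5c4, e6c4, e7c4, e8c4, g1c4, g2c4, g3c4, g4c4, g5c4, g6c4, g7c4, g8c4, i1c4, i3c4, i5c4, j1c4, j3c4, j5c4, zero_add, add_zero] at h1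
    exact proj1_ne (c := 5) (d := 14) (by decide) h1
  · intro h
    have h1 := congrFun h (proj1 4)
    simp only [e1c4, e2c4, e3c4, e4c4, e5c4, e6c4, e7c4, e8c4, g1c4, g2c4, g3c4, g4c4, g5c4, g6c4, g7c4, g8c4, i1c4, i3c4, i5c4, j1c4, j3c4, j5c4, zero_add, add_zero] at h1
    exact proj1_ne (c := 5) (d := 14) (by decide) h1
  · intro h
    have h1 := congrFun h (proj1 4)
    simp only [e1c4, e2c4, e3c4, e4c4, e5c4, e6c4, e7c4, e8c4, g1c4, g2c4, g3c4, g4c4, g5c4, g6c4, g7c4, g8c4, i1c4, i3c4, i5c4, j1c4, j3c4, j5c4, zero_add, add_zero] at h1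
    exact proj1_ne (c := 5) (d := 32) (by decide) h1
  · intro h
    have h1 := congrFun h (proj1 4)
    simp only [e1c4, e2c4, e3c4, e4c4, e5c4, e6c4, e7c4, e8c4, g1c4, g2c4, g3c4, g4c4, g5c4, g6c4, g7c4, g8c4, i1c4, i3c4, i5c4, j1c4, j3c4, j5c4, zero_add, add_zero] at h1
    exact proj1_ne (c := 5) (d := 39) (by decide) h1
  · intro h
    have h1 := congrFun h (proj1 4)
    simp only [e1c4, e2c4, e3c4, e4c4, e5c4, e6c4, e7c4, e8c4, g1c4, g2c4, g3c4, g4c4, g5c4, g6c4, g7c4, g8c4, i1c4, i3c4, i5c4, j1c4, j3c4, j5c4, zero_add, add_zero] at h1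
    exact proj1_ne (c := 5) (d := 14) (by decide) h1
  · intro h
    have h1 := congrFun h (proj1 4)
    simp only [e1c4, e2c4, e3c4, e4c4, e5c4, e6c4, e7c4, e8c4, g1c4, g2c4, g3c4, g4c4, g5c4, g6c4, g7c4, g8c4, i1c4, i3c4, i5c4, j1c4, j3c4, j5c4, zero_add, add_zero] at h1
    exact proj1_ne (c := 5) (d := 14) (by decide) h1
  · intro h
    have h1 := congrFun h (proj1 4)
    simp only [e1c4, e2c4, e3c4, e4c4, e5c4, e6c4, e7c4, e8c4, g1c4, g2c4, g3c4, g4c4, g5c4, g6c4, g7c4, g8c4, i1c4, i3c4, i5c4, j1c4, j3c4, j5c4, zero_add, add_zero] at h1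
    exact proj1_ne (c := 5) (d := 32) (by decide) h1
  · intro h
    have h1 := congrFun h (proj1 4)
    simp only [e1c4, e2c4, e3c4, e4c4, e5c4, e6c4, e7c4, e8c4, g1c4, g2c4, g3c4, g4c4, g5c4, g6c4, g7c4, g8c4, i1c4, i3c4, i5c4, j1c4, j3c4, j5c4, zero_add, add_zero] at h1
    exact proj1_ne (c := 5) (d := 39) (by decide) h1
  · intro h
    have h1 := congrFun h (proj1 3)
    simp only [e1c3, e2c3, e3c3, e4c3, e5c3, e6c3, e7c3, e8c3, g1c3, g2c3, g3c3, g4c3, g5c3, g6c3, g7c3, g8c3, zero_add, add_zero] at h1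
    exact proj1_ne (c := 10) (d := 4) (by decide) h1
  · intro h
    have h1 := congrFun h (proj1 4)
    simp only [e1c4, e2c4, e3c4, e4c4, e5c4, e6c4, e7c4, e8c4, g1c4, g2c4, g3c4, g4c4, g5c4, g6c4, g7c4, g8c4, i1c4, i3c4, i5c4, j1c4, j3c4, j5c4, zero_add, add_zero] at h1
    exact proj1_ne (c := 14) (d := 32) (by decide) h1
  · intro h
    have h1 := congrFun h (proj1 4)
    simp only [e1c4, e2c4, e3c4, e4c4, e5c4, e6c4, e7c4, e8c4, g1c4, g2c4, g3c4, g4c4, g5c4, g6c4, g7c4, g8c4, i1c4, i3c4, i5c4, j1c4, j3c4, j5c4, zero_add, add_zero] at h1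
    exact proj1_ne (c := 14) (d := 39) (by decide) h1
  · intro h
    have h1 := congrFun h (proj1 4)
    simp only [e1c4, e2c4, e3c4, e4c4, e5c4, e6c4, e7c4, e8c4, g1c4, g2c4, g3c4, g4c4, g5c4, g6c4, g7c4, g8c4, i1c4, i3c4, i5c4, j1c4, j3c4, j5c4, zero_add, add_zero] at h1
    exact proj1_ne (c := 14) (d := 32) (by decide) h1
  · intro h
    have h1 := congrFun h (proj1 4)
    simp only [e1c4, e2c4, e3c4, e4c4, e5c4, e6c4, e7c4, e8c4, g1c4, g2c4, g3c4, g4c4, g5c4, g6c4, g7c4, g8c4, i1c4, i3c4, i5c4, j1c4, j3c4, j5c4, zero_add, add_zero] at h1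
    exact proj1_ne (c := 14) (d := 39) (by decide) h1
  · intro h
    have h1 := congrFun h (proj1 4)
    simp only [e1c4, e2c4, e3c4, e4c4, e5c4, e6c4, e7c4, e8c4, g1c4, g2c4, g3c4, g4c4, g5c4, g6c4, g7c4, g8c4, i1c4, i3c4, i5c4, j1c4, j3c4, j5c4, zero_add, add_zero] at h1
    exact proj1_ne (c := 32) (d := 39) (by decide) h1
end
end
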